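/- Let (X₁, X₂) be bivariate normal with benchmark Y := α₁X₁ + α₂X₂ non-degenerate, and set r_A := Cov[X₁, X₂ | Y ∈ A]. Then the 20/60/20-rule-induced equilibrium equality r_{A₁} − 2·r_{A₂} + r_{A₃} = 0 holds, where A₁ := A(0, q̃), A₂ := A(q̃, 1−q̃), and A₃ := A(1−q̃, 1). -/

import Mathlib

open MeasureTheory ProbabilityTheory Filter Set

noncomputable section

/-- Covariance of two real random variables under the measure `m`. -/
def covar {Ω : Type*} [MeasurableSpace Ω] (m : Measure Ω) (f g : Ω → ℝ) : ℝ :=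
  ∫ ω, (f ω - ∫ x, f x ∂m) * (g ω - ∫ x, g x ∂m) ∂m

/-- Generalized inverse of the CDF of a measure on `ℝ`, `F⁻¹(p) = inf {y | F(y) ≥ p}`,
with values in `EReal` (`⊥` at `p = 0` and `⊤` at `p = 1` for fully supported laws). -/
def invCDF (μ : Measure ℝ) (p : ℝ) : EReal :=
  sInf ((fun x : ℝ => (x : EReal)) '' {x : ℝ | p ≤ cdf μ x})

/-- Quantile conditioning set `A(a,b) = {y : F⁻¹(a) < y < F⁻¹(b)}`. -/
def qSet (μ : Measure ℝ) (a b : ℝ) : Set ℝ :=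
  {y : ℝ | invCDF μ a < (y : EReal) ∧ (y : EReal) < invCDF μ b}

/-- The standard normal quantile function `Φ⁻¹(p) = inf {x | Φ(x) ≥ p}`. -/
def stdNormalQuantile (p : ℝ) : ℝ := sInf {x : ℝ | p ≤ cdf (gaussianReal 0 1) x}

/-- The distribution function of a measure charging every nonempty open set is strictly
increasing. -/
lemma strictMono_cdf (μ : Measure ℝ) [IsProbabilityMeasure μ] [μ.IsOpenPosMeasure] :
    StrictMono (cdf μ) := by
  intro a b hab
  have hpos : 0 < μ (Ioc a b) :=
    (isOpen_Ioo.measure_pos μ (nonempty_Ioo.2 hab)).trans_le (measure_mono Ioo_subset_Ioc_self)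
  rw [← measure_cdf μ, StieltjesFunction.measure_Ioc, ENNReal.ofReal_pos] at hpos
  linarith

/-- The distribution function of an atomless measure is continuous. -/
lemma continuous_cdf (μ : Measure ℝ) [IsProbabilityMeasure μ] [NullSingletonClass μ] :
    Continuous (cdf μ) := by
  refine continuous_iff_continuousAt.2 fun a => ?_
  rw [(monotone_cdf μ).continuousAt_iff_leftLim_eq_rightLim, StieltjesFunction.rightLim_eq]
  refine le_antisymm ((monotone_cdf μ).leftLim_le le_rfl) ?_
  have h : μ {a} = 0 := measure_singleton a
  rw [← measure_cdf μ, StieltjesFunction.measure_singleton, ENNReal.ofReal_eq_zero] at h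
  linarith

lemma exists_cdf_eq (μ : Measure ℝ) [IsProbabilityMeasure μ] [NullSingletonClass μ] {p : ℝ}
    (hp : p ∈ Ioo (0 : ℝ) 1) : ∃ z, cdf μ z = p :=
  mem_range_of_exists_le_of_exists_ge (continuous_cdf μ)
    (((tendsto_cdf_atBot μ).eventually_le_const hp.1).exists)
    (((tendsto_cdf_atTop μ).eventually_const_le hp.2).exists)

lemma setOf_cdf_le_cdf (μ : Measure ℝ) [IsProbabilityMeasure μ] [μ.IsOpenPosMeasure] (z : ℝ) :
    {x | cdf μ z ≤ cdf μ x} = Ici z := by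
  ext x
  exact (strictMono_cdf μ).le_iff_le

lemma invCDF_cdf (μ : Measure ℝ) [IsProbabilityMeasure μ] [μ.IsOpenPosMeasure] (z : ℝ) :
    invCDF μ (cdf μ z) = z := by
  rw [invCDF, setOf_cdf_le_cdf]
  refine IsLeast.csInf_eq ⟨⟨z, self_mem_Ici, rfl⟩, ?_⟩
  rintro _ ⟨x, hx, rfl⟩
  exact EReal.coe_le_coe_iff.2 hx

lemma invCDF_zero (μ : Measure ℝ) [IsProbabilityMeasure μ] : invCDF μ 0 = ⊥ := by
  rw [invCDF, EReal.eq_bot_iff_forall_lt]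
  exact fun y => sInf_lt_iff.2 ⟨((y - 1 : ℝ) : EReal), ⟨y - 1, cdf_nonneg μ _, rfl⟩,
    EReal.coe_lt_coe_iff.2 (by linarith)⟩

lemma invCDF_one (μ : Measure ℝ) [IsProbabilityMeasure μ] [μ.IsOpenPosMeasure] :
    invCDF μ 1 = ⊤ := by
  have h : {x : ℝ | 1 ≤ cdf μ x} = ∅ := by
    refine eq_empty_of_forall_notMem fun x hx => ?_
    have h₁ := strictMono_cdf μ (lt_add_one x)
    have h₂ := cdf_le_one μ (x + 1)
    have h₃ : 1 ≤ cdf μ x := hx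
    linarith
  rw [invCDF, h, image_empty, sInf_empty]

lemma isOpenPosMeasure_gaussianReal (m : ℝ) {v : NNReal} (hv : v ≠ 0) :
    (gaussianReal m v).IsOpenPosMeasure :=
  (gaussianReal_absolutelyContinuous' m hv).isOpenPosMeasure

instance : (gaussianReal 0 1).IsOpenPosMeasure := isOpenPosMeasure_gaussianReal 0 one_ne_zero

instance : NullSingletonClass (gaussianReal 0 1) := nullSingletonClass_gaussianReal one_ne_zero

lemma stdNormalQuantile_cdf (z : ℝ) : stdNormalQuantile (cdf (gaussianReal 0 1) z) = z := by
  rw [stdNormalQuantile, setOf_cdf_le_cdf, csInf_Ici]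

/-- Every normal law is an affine image of the standard normal law. -/
lemma gaussianReal_eq_map_std (m : ℝ) (v : NNReal) :
    gaussianReal m v = (gaussianReal 0 1).map (fun x => √v * x + m) := by
  have h : (fun x : ℝ => √v * x + m) = (· + m) ∘ (√v * ·) := rfl
  rw [h, ← Measure.map_map (by fun_prop) (by fun_prop), gaussianReal_map_const_mul,
    gaussianReal_map_add_const]
  congr 1
  · simp
  · ext
    simp

lemma cdf_gaussianReal_affine (m : ℝ) {v : NNReal} (hv : v ≠ 0) (z : ℝ) :
    cdf (gaussianReal m v) (√v * z + m) = cdf (gaussianReal 0 1) z := by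
  have hs : 0 < √(v : ℝ) := Real.sqrt_pos.2 (by positivity)
  rw [cdf_eq_real, cdf_eq_real, gaussianReal_eq_map_std m v,
    map_measureReal_apply (by fun_prop) measurableSet_Iic]
  congr 1
  ext x
  simp [hs]

lemma cdf_std_neg (z : ℝ) :
    cdf (gaussianReal 0 1) (-z) = 1 - cdf (gaussianReal 0 1) z := by
  have h : (gaussianReal 0 1).real (Iic (-z)) = (gaussianReal 0 1).real (Ioi z) := by
    conv_lhs => rw [← neg_zero, ← gaussianReal_map_neg]
    rw [map_measureReal_apply (by fun_prop) measurableSet_Iic,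
      measureReal_congr (Ioi_ae_eq_Ici (a := z))]
    congr 1
    ext x
    simp
  rw [cdf_eq_real, cdf_eq_real, h, ← compl_Iic, probReal_compl_eq_one_sub measurableSet_Iic]

/-- Conditioning commutes with pushing forward. -/
lemma map_cond_preimage {Ω E : Type*} [MeasurableSpace Ω] [MeasurableSpace E] (P : Measure Ω)
    {f : Ω → E} (hf : Measurable f) {A : Set E} (hA : MeasurableSet A) :
    (P[|f ⁻¹' A]).map f = (P.map f)[|A] := by
  rw [ProbabilityTheory.cond, ProbabilityTheory.cond, Measure.map_smul,
    Measure.restrict_map hf hA, Measure.map_apply hf hA]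

lemma MemLp.cond_measure {Ω : Type*} [MeasurableSpace Ω] {P : Measure Ω}
    {X : Ω → ℝ} {p : ENNReal} (hX : MemLp X p P) {s : Set Ω} (hs : P s ≠ 0) :
    MemLp X p (P[|s]) :=
  (hX.restrict s).smul_measure (ENNReal.inv_ne_top.2 hs)

lemma variance_cond_gaussianReal (m : ℝ) {v : NNReal} {A : Set ℝ} (hA : MeasurableSet A)
    (h0 : gaussianReal m v A ≠ 0) :
    variance id ((gaussianReal m v)[|A])
      = v * variance id ((gaussianReal 0 1)[|(fun x => √v * x + m) ⁻¹' A]) := by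
  have hf : Measurable fun x : ℝ => √v * x + m := by fun_prop
  rw [gaussianReal_eq_map_std m v, Measure.map_apply hf hA] at h0
  have := cond_isProbabilityMeasure h0
  rw [gaussianReal_eq_map_std m v, ← map_cond_preimage _ hf hA, variance_id_map hf.aemeasurable,
    variance_add_const (by fun_prop), variance_const_mul, Real.sq_sqrt v.coe_nonneg]
  rfl

lemma variance_cond_std_neg {A : Set ℝ} (hA : MeasurableSet A) :
    variance id ((gaussianReal 0 1)[|A])
      = variance id ((gaussianReal 0 1)[|(fun x => -x) ⁻¹' A]) := by
  conv_lhs => rw [← neg_zero, ← gaussianReal_map_neg]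
  rw [← map_cond_preimage _ measurable_neg hA, variance_id_map (by fun_prop), variance_fun_neg]
  rfl

/-- Conditioning on an event of the first of two independent variables keeps them independent
and does not change the law of the second. -/
lemma IndepFun.cond_preimage {Ω : Type*} [MeasurableSpace Ω] {P : Measure Ω}
    [IsProbabilityMeasure P] {Y W : Ω → ℝ} (h : IndepFun Y W P) (hY : Measurable Y)
    (hW : Measurable W) {A : Set ℝ} (hA : MeasurableSet A) (h0 : P (Y ⁻¹' A) ≠ 0) :
    IndepFun Y W (P[|Y ⁻¹' A]) ∧ (P[|Y ⁻¹' A]).map W = P.map W := by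
  have hW' : ∀ C, MeasurableSet C → P[|Y ⁻¹' A] (W ⁻¹' C) = P (W ⁻¹' C) := by
    intro C hC
    rw [cond_apply (hY hA), h.measure_inter_preimage_eq_mul _ _ hA hC, ← mul_assoc,
      ENNReal.inv_mul_cancel h0 (measure_ne_top _ _), one_mul]
  refine ⟨?_, ?_⟩
  · rw [indepFun_iff_measure_inter_preimage_eq_mul]
    intro B C hB hC
    rw [hW' C hC, cond_apply (hY hA), cond_apply (hY hA), ← inter_assoc, ← preimage_inter,
      h.measure_inter_preimage_eq_mul _ _ (hA.inter hB) hC, mul_assoc]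
  · ext C hC
    rw [Measure.map_apply hW hC, Measure.map_apply hW hC, hW' C hC]

/-- If `(X₁, X₂)` is jointly normal, the covariance of `X₁, X₂` conditional on an event of the
linear combination `Y` is an affine function of the conditional variance of `Y`. -/
lemma exists_covariance_cond_eq {Ω : Type*} [MeasurableSpace Ω] {P : Measure Ω}
    [IsProbabilityMeasure P] {X₁ X₂ : Ω → ℝ} (hX₁ : Measurable X₁) (hX₂ : Measurable X₂)
    (hG : ∀ c₁ c₂ : ℝ, ∃ m v, P.map (fun ω => c₁ * X₁ ω + c₂ * X₂ ω) = gaussianReal m v)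
    (α₁ α₂ : ℝ) {Y : Ω → ℝ} (hY : Y = fun ω => α₁ * X₁ ω + α₂ * X₂ ω)
    (hv : 0 < variance Y P) :
    ∃ a b : ℝ, ∀ A, MeasurableSet A → P (Y ⁻¹' A) ≠ 0 →
      cov[X₁, X₂; P[|Y ⁻¹' A]] = a * variance Y (P[|Y ⁻¹' A]) + b := by
  have hYm : Measurable Y := by rw [hY]; fun_prop
  have hL : ∀ c₁ c₂ : ℝ, MemLp (fun ω => c₁ * X₁ ω + c₂ * X₂ ω) 2 P := by
    intro c₁ c₂
    obtain ⟨m, v, h⟩ := hG c₁ c₂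
    have h2 : MemLp id 2 (P.map (fun ω => c₁ * X₁ ω + c₂ * X₂ ω)) := by
      rw [h]; exact memLp_id_gaussianReal 2
    exact (memLp_map_measure_iff (by fun_prop) (by fun_prop)).1 h2
  have hL₁ : MemLp X₁ 2 P := by simpa using hL 1 0
  have hL₂ : MemLp X₂ 2 P := by simpa using hL 0 1
  have hLY : MemLp Y 2 P := hY ▸ hL α₁ α₂
  set k₁ := cov[X₁, Y; P]
  set k₂ := cov[X₂, Y; P]
  set v := variance Y P
  have hcov : ∀ c₁ c₂ : ℝ, cov[fun ω => c₁ * X₁ ω + c₂ * X₂ ω, Y; P] = c₁ * k₁ + c₂ * k₂ := by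
    intro c₁ c₂
    rw [← covariance_const_mul_left, ← covariance_const_mul_left]
    exact covariance_add_left (hL₁.const_mul c₁) (hL₂.const_mul c₂) hLY
  have hvk : α₁ * k₁ + α₂ * k₂ = v := by
    rw [← hcov, ← hY, covariance_self hYm.aemeasurable]
  set W : Ω → ℝ := fun ω => (-k₂) * X₁ ω + k₁ * X₂ ω with hW
  have hWm : Measurable W := by rw [hW]; fun_prop
  have hLW : MemLp W 2 P := hL _ _
  have hWY : cov[Y, W; P] = 0 := by
    rw [covariance_comm, hcov]; ring
  have hgauss : HasGaussianLaw (fun ω => (Y ω, W ω)) P := by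
    refine ⟨isGaussian_of_map_eq_gaussianReal fun L => ?_⟩
    obtain ⟨m, u, h⟩ := hG (L (1, 0) * α₁ - L (0, 1) * k₂) (L (1, 0) * α₂ + L (0, 1) * k₁)
    refine ⟨m, u, ?_⟩
    rw [Measure.map_map (by fun_prop) (by fun_prop), ← h]
    congr 1
    ext ω
    have hLdecomp : L (Y ω, W ω) = Y ω * L (1, 0) + W ω * L (0, 1) := by
      rw [← smul_eq_mul, ← smul_eq_mul, ← map_smul, ← map_smul, ← map_add]
      simp
    rw [Function.comp_apply, hLdecomp, hY, hW]
    ring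
  have hind : IndepFun Y W P := hgauss.indepFun_of_covariance_eq_zero hWY
  refine ⟨k₁ * k₂ / v ^ 2, -(α₁ * α₂ / v ^ 2 * variance W P), fun A hA h0 => ?_⟩
  have := cond_isProbabilityMeasure h0
  obtain ⟨hind', hmap⟩ := IndepFun.cond_preimage hind hYm hWm hA h0
  have hVW : variance W (P[|Y ⁻¹' A]) = variance W P := by
    rw [← variance_id_map hWm.aemeasurable, hmap, variance_id_map hWm.aemeasurable]
  have hLY' := MemLp.cond_measure hLY h0
  have hLW' := MemLp.cond_measure hLW h0
  have hzero := hind'.covariance_eq_zero hLY' hLW'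
  have hX₁eq : X₁ = (fun ω => k₁ / v * Y ω) + fun ω => -α₂ / v * W ω := by
    ext ω
    simp only [Pi.add_apply, hY, hW]
    field_simp
    rw [← hvk]
    ring
  have hX₂eq : X₂ = (fun ω => k₂ / v * Y ω) + fun ω => α₁ / v * W ω := by
    ext ω
    simp only [Pi.add_apply, hY, hW]
    field_simp
    rw [← hvk]
    ring
  have hexpand : ∀ a b c d : ℝ,
      cov[(fun ω => a * Y ω) + (fun ω => b * W ω), (fun ω => c * Y ω) + fun ω => d * W ω;
        P[|Y ⁻¹' A]] = a * c * variance Y (P[|Y ⁻¹' A]) + b * d * variance W P := by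
    intro a b c d
    rw [covariance_add_left (hLY'.const_mul a) (hLW'.const_mul b)
        ((hLY'.const_mul c).add (hLW'.const_mul d)),
      covariance_add_right (hLY'.const_mul a) (hLY'.const_mul c) (hLW'.const_mul d),
      covariance_add_right (hLW'.const_mul b) (hLY'.const_mul c) (hLW'.const_mul d)]
    simp only [covariance_const_mul_left, covariance_const_mul_right]
    rw [covariance_comm W Y, hzero, covariance_self hYm.aemeasurable,
      covariance_self hWm.aemeasurable, hVW]
    ring
  have hcov' := hexpand (k₁ / v) (-α₂ / v) (k₂ / v) (α₁ / v)
  rw [← hX₁eq, ← hX₂eq] at hcov'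
  rw [hcov']
  ring

/-- For a bivariate normal vector `(X₁, X₂)` with non-degenerate benchmark
`Y = α₁X₁ + α₂X₂`, the 20/60/20-rule-induced equilibrium holds:
`r_{A₁} − 2 r_{A₂} + r_{A₃} = 0`, where `r_A = Cov[X₁, X₂ | Y ∈ A]` and
`A₁ = A(0, q̃)`, `A₂ = A(q̃, 1−q̃)`, `A₃ = A(1−q̃, 1)`. -/
theorem equilibrium_206020
    {Ω : Type*} [MeasureSpace Ω] [IsProbabilityMeasure (ℙ : Measure Ω)]
    (X₁ X₂ : Ω → ℝ) (hX₁ : Measurable X₁) (hX₂ : Measurable X₂)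
    (μ₁ μ₂ σ₁ σ₂ r ρ : ℝ) (hσ₁ : 0 < σ₁) (hσ₂ : 0 < σ₂)
    (hρ : ρ = r / (σ₁ * σ₂)) (hρmem : ρ ∈ Set.Ioo (-1 : ℝ) 1)
    (hGauss : ∀ c₁ c₂ : ℝ,
      (ℙ : Measure Ω).map (fun ω => c₁ * X₁ ω + c₂ * X₂ ω)
        = gaussianReal (c₁ * μ₁ + c₂ * μ₂)
            (Real.toNNReal (c₁ ^ 2 * σ₁ ^ 2 + 2 * c₁ * c₂ * r + c₂ ^ 2 * σ₂ ^ 2)))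
    (α₁ α₂ : ℝ) (hα : (α₁, α₂) ≠ (0, 0))
    (Y : Ω → ℝ) (hY : Y = fun ω => α₁ * X₁ ω + α₂ * X₂ ω)
    (hVarYpos : 0 < variance Y ℙ)
    (q : ℝ) (hq : q ∈ Set.Ioo (0 : ℝ) (1/2))
    (hqdef : variance (fun x => x) ((gaussianReal 0 1)[|Set.Iio (stdNormalQuantile q)])
      = variance (fun x => x)
          ((gaussianReal 0 1)[|Set.Ioo (stdNormalQuantile q) (stdNormalQuantile (1 - q))]))
    (A₁ A₂ A₃ : Set ℝ)
    (hA₁ : A₁ = qSet ((ℙ : Measure Ω).map Y) 0 q)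
    (hA₂ : A₂ = qSet ((ℙ : Measure Ω).map Y) q (1 - q))
    (hA₃ : A₃ = qSet ((ℙ : Measure Ω).map Y) (1 - q) 1) :
    covar (ℙ[|Y ⁻¹' A₁]) X₁ X₂ - 2 * covar (ℙ[|Y ⁻¹' A₂]) X₁ X₂
      + covar (ℙ[|Y ⁻¹' A₃]) X₁ X₂ = 0 := by
  obtain ⟨m, v, hlaw⟩ : ∃ m v, (ℙ : Measure Ω).map Y = gaussianReal m v :=
    ⟨_, _, hY ▸ hGauss α₁ α₂⟩
  have hYm : Measurable Y := by rw [hY]; fun_prop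
  have hv : v ≠ 0 := by
    rintro rfl
    rw [← variance_id_map hYm.aemeasurable, hlaw, variance_id_gaussianReal] at hVarYpos
    simp at hVarYpos
  have hs : 0 < √(v : ℝ) := Real.sqrt_pos.2 (by positivity)
  have := isOpenPosMeasure_gaussianReal m hv
  obtain ⟨z, hz⟩ := exists_cdf_eq (gaussianReal 0 1) (p := q) ⟨hq.1, by linarith [hq.2]⟩
  have hz' : cdf (gaussianReal 0 1) (-z) = 1 - q := by rw [cdf_std_neg, hz]
  have hzneg : z < -z := by
    rw [← (strictMono_cdf (gaussianReal 0 1)).lt_iff_lt, hz, hz']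
    linarith [hq.2]
  have hQ : stdNormalQuantile q = z := by rw [← hz, stdNormalQuantile_cdf]
  have hQ' : stdNormalQuantile (1 - q) = -z := by rw [← hz', stdNormalQuantile_cdf]
  have hI : invCDF (gaussianReal m v) q = ((√v * z + m : ℝ) : EReal) := by
    rw [← invCDF_cdf (gaussianReal m v), cdf_gaussianReal_affine m hv, hz]
  have hI' : invCDF (gaussianReal m v) (1 - q) = ((√v * (-z) + m : ℝ) : EReal) := by
    rw [← invCDF_cdf (gaussianReal m v), cdf_gaussianReal_affine m hv, hz']
  have hA₁' : A₁ = Iio (√v * z + m) := by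
    rw [hA₁, hlaw]; ext y
    simp only [qSet, invCDF_zero, hI, mem_ofPred_eq, EReal.bot_lt_coe, true_and,
      EReal.coe_lt_coe_iff, mem_Iio]
  have hA₂' : A₂ = Ioo (√v * z + m) (√v * (-z) + m) := by
    rw [hA₂, hlaw]; ext y
    simp only [qSet, hI, hI', mem_ofPred_eq, EReal.coe_lt_coe_iff, mem_Ioo]
  have hA₃' : A₃ = Ioi (√v * (-z) + m) := by
    rw [hA₃, hlaw]; ext y
    simp only [qSet, invCDF_one, hI', mem_ofPred_eq, EReal.coe_lt_top, and_true,
      EReal.coe_lt_coe_iff, mem_Ioi]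
  have hpos : ∀ A : Set ℝ, IsOpen A → A.Nonempty → gaussianReal m v A ≠ 0 :=
    fun A hA hne => hA.measure_ne_zero _ hne
  have hpos₁ : gaussianReal m v A₁ ≠ 0 := hA₁' ▸ hpos _ isOpen_Iio nonempty_Iio
  have hpos₂ : gaussianReal m v A₂ ≠ 0 :=
    hA₂' ▸ hpos _ isOpen_Ioo (nonempty_Ioo.2 (by gcongr))
  have hpos₃ : gaussianReal m v A₃ ≠ 0 := hA₃' ▸ hpos _ isOpen_Ioi nonempty_Ioi
  have hm₁ : MeasurableSet A₁ := hA₁' ▸ measurableSet_Iio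
  have hm₂ : MeasurableSet A₂ := hA₂' ▸ measurableSet_Ioo
  have hm₃ : MeasurableSet A₃ := hA₃' ▸ measurableSet_Ioi
  obtain ⟨a, b, hab⟩ := exists_covariance_cond_eq hX₁ hX₂ (fun c₁ c₂ => ⟨_, _, hGauss c₁ c₂⟩)
    α₁ α₂ hY hVarYpos
  have hcovar : ∀ A, MeasurableSet A → gaussianReal m v A ≠ 0 →
      covar (ℙ[|Y ⁻¹' A]) X₁ X₂
        = a * (v * variance id ((gaussianReal 0 1)[|(fun x => √v * x + m) ⁻¹' A])) + b := by
    intro A hA h0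
    rw [← variance_cond_gaussianReal m hA h0, ← hlaw, ← map_cond_preimage _ hYm hA,
      variance_id_map hYm.aemeasurable]
    rw [← hlaw, Measure.map_apply hYm hA] at h0
    exact hab A hA h0
  have hpre₁ : (fun x => √v * x + m) ⁻¹' A₁ = Iio z := by
    rw [hA₁']; ext x; simp [hs]
  have hpre₂ : (fun x => √v * x + m) ⁻¹' A₂ = Ioo z (-z) := by
    rw [hA₂']; ext x
    simp only [mem_preimage, mem_Ioo, add_lt_add_iff_right, mul_lt_mul_iff_right₀ hs]
  have hpre₃ : (fun x => √v * x + m) ⁻¹' A₃ = Ioi (-z) := by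
    rw [hA₃']; ext x
    simp only [mem_preimage, mem_Ioi, add_lt_add_iff_right, mul_lt_mul_iff_right₀ hs]
  have hneg : (fun x : ℝ => -x) ⁻¹' Ioi (-z) = Iio z := by
    ext x; simp
  rw [hQ, hQ'] at hqdef
  have hqdef' : variance id ((gaussianReal 0 1)[|Iio z])
      = variance id ((gaussianReal 0 1)[|Ioo z (-z)]) := hqdef
  rw [hcovar A₁ hm₁ hpos₁, hcovar A₂ hm₂ hpos₂, hcovar A₃ hm₃ hpos₃, hpre₁, hpre₂, hpre₃,
    variance_cond_std_neg measurableSet_Ioi, hneg, hqdef']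
  ring
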